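/- Let d ≥ 2 and suppose there exists C > 0 such that ℙ_{p_c}(0 ↔ ∂B_0(n)) ≤ C/n² for all integers n ≥ 1. Then for every η > 0 and every integer ℓ ≥ 1 there exists M > 0 such that for every integer L ≥ 1 there exists p > p_c with ℙ_p(𝒜(x,ℓ,L,M)) ≥ 1 − η for every x ∈ ℤ^d. -/

import Mathlib

open MeasureTheory Set

namespace Perc

/-- Vertices of the lattice `ℤ^d`. -/
abbrev V (d : ℕ) : Type := Fin d → ℤ

/-- Nearest-neighbour adjacency in `ℤ^d`: `‖x - y‖₁ = 1`. -/
def Adjacent {d : ℕ} (x y : V d) : Prop := (∑ i, |x i - y i|) = 1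

/-- `e` is an edge of the nearest-neighbour lattice `ℤ^d`. -/
def IsEdge {d : ℕ} (e : Sym2 (V d)) : Prop := ∃ x y : V d, Adjacent x y ∧ e = s(x, y)

/-- The edge set `E(ℤ^d)` of the nearest-neighbour lattice. -/
abbrev Edge (d : ℕ) : Type := {e : Sym2 (V d) // IsEdge e}

/-- A bond percolation configuration: each edge is open (`true`) or closed (`false`). -/
abbrev Config (d : ℕ) : Type := Edge d → Bool

/-- `x` and `y` are joined by an open edge of `ω`. -/
def OpenAdj {d : ℕ} (ω : Config d) (x y : V d) : Prop :=
  ∃ h : IsEdge s(x, y), ω ⟨s(x, y), h⟩ = true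

/-- `x` and `y` lie in the same open cluster of `ω`. -/
def Connected {d : ℕ} (ω : Config d) (x y : V d) : Prop :=
  Relation.ReflTransGen (OpenAdj ω) x y

/-- The open cluster of `ω` containing `x`. -/
def cluster {d : ℕ} (ω : Config d) (x : V d) : Set (V d) := {y | Connected ω x y}

/-- `x` lies in an infinite open cluster of `ω`. -/
def InInfinite {d : ℕ} (ω : Config d) (x : V d) : Prop := (cluster ω x).Infinite

/-- `𝒞∞(ω)`: the set of vertices lying in infinite open clusters. -/
def Cinf {d : ℕ} (ω : Config d) : Set (V d) := {x | InInfinite ω x}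

/-- `ω` has an infinite open cluster. -/
def HasInfCluster {d : ℕ} (ω : Config d) : Prop := ∃ x : V d, InInfinite ω x

/-- The Bernoulli(p) weight of a single edge state (`true ↦ p`, `false ↦ 1 - p`). -/
noncomputable def bernoulliCyl (p : ℝ) (b : Bool) : ENNReal :=
  if b then ENNReal.ofReal p else ENNReal.ofReal (1 - p)

/-- `μ` is the product Bernoulli(`p`) measure on configurations: it is a probability
measure whose finite-dimensional cylinder probabilities are the i.i.d. Bernoulli ones. -/
def IsBernoulli (d : ℕ) (p : ℝ) (μ : Measure (Config d)) : Prop :=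
  IsProbabilityMeasure μ ∧
    ∀ (t : Finset (Edge d)) (f : Edge d → Bool),
      μ {ω | ∀ e ∈ t, ω e = f e} = ∏ e ∈ t, bernoulliCyl p (f e)

/-- The critical probability `p_c` associated with a family `P p` of Bernoulli(`p`)
percolation measures. -/
noncomputable def pcOf (d : ℕ) (P : ℝ → Measure (Config d)) : ℝ :=
  sInf {p | p ∈ Icc (0 : ℝ) 1 ∧ 0 < P p {ω | HasInfCluster ω}}

/-- The monotone coupling randomness: `U` is the law of i.i.d. uniform-`[0,1]` labels on
the edges (characterized by its finite-dimensional distribution functions). -/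
def IsUniform (d : ℕ) (U : Measure (Edge d → ℝ)) : Prop :=
  IsProbabilityMeasure U ∧
    ∀ (t : Finset (Edge d)) (a : Edge d → ℝ),
      U {u | ∀ e ∈ t, u e ≤ a e} = ∏ e ∈ t, ENNReal.ofReal (min (max (a e) 0) 1)

/-- The configuration `ω_p` obtained from uniform labels `u` in the monotone coupling. -/
noncomputable def level {d : ℕ} (p : ℝ) (u : Edge d → ℝ) : Config d :=
  fun e => decide (u e ≤ p)

open Classical in
/-- `ω^S`: the configuration obtained from `ω` by closing every edge with an endpoint
in `S`. -/
noncomputable def closeOn {d : ℕ} (S : Set (V d)) (ω : Config d) : Config d :=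
  fun e => if ∃ x ∈ e.val, x ∈ S then false else ω e

/-- `ω̃_p` built from `ω_p`: keep an edge open iff it is open and its cluster is finite. -/
noncomputable def burn {d : ℕ} (ω : Config d) : Config d := closeOn (Cinf ω) ω

open Classical in
/-- The restriction of `ω` to edges with both endpoints in `R` (other edges closed). -/
noncomputable def restrictTo {d : ℕ} (R : Set (V d)) (ω : Config d) : Config d :=
  fun e => if ∀ x ∈ e.val, x ∈ R then ω e else false

/-- The box `B_x(L) = {y : ‖y - x‖_∞ ≤ L}`. -/
def box {d : ℕ} (x : V d) (L : ℕ) : Set (V d) := {y | ∀ i, |y i - x i| ≤ (L : ℤ)}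

/-- The sphere `∂B_x(L) = {y : ‖y - x‖_∞ = L}`. -/
def sphere {d : ℕ} (x : V d) (L : ℕ) : Set (V d) :=
  {y | (∀ i, |y i - x i| ≤ (L : ℤ)) ∧ ∃ i, |y i - x i| = (L : ℤ)}

/-- The slab `S_ℓ = {x : |x_i| ≤ ℓ for all coordinates i ≥ 3}` (`0`-indexed: `i ≥ 2`). -/
def slab (d : ℕ) (ℓ : ℕ) : Set (V d) := {x | ∀ i : Fin d, 2 ≤ (i : ℕ) → |x i| ≤ (ℓ : ℤ)}

/-- `x` is connected by an open path to some vertex of `S`. -/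
def ConnectedToSet {d : ℕ} (ω : Config d) (x : V d) (S : Set (V d)) : Prop :=
  ∃ y ∈ S, Connected ω x y

/-- The set of vertices `y ∈ S_ℓ ∩ B_x(3L)` with `y ↔ ∂B_y(L)`. -/
def armSet {d : ℕ} (ω : Config d) (x : V d) (ℓ L : ℕ) : Set (V d) :=
  {y | y ∈ slab d ℓ ∩ box x (3 * L) ∧ ConnectedToSet ω y (sphere y L)}

/-- The event `𝒜(x,ℓ,L,M)`: strictly fewer than `M` vertices `y ∈ S_ℓ ∩ B_x(3L)`
are connected to `∂B_y(L)`. -/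
def eventA {d : ℕ} (x : V d) (ℓ L M : ℕ) : Set (Config d) :=
  {ω | (armSet ω x ℓ L).Finite ∧ (armSet ω x ℓ L).ncard < M}

/-- The set `C` has `ℓ∞`-diameter strictly larger than `L`. -/
def DiamGT {d : ℕ} (C : Set (V d)) (L : ℕ) : Prop :=
  ∃ a ∈ C, ∃ b ∈ C, ∃ i, (L : ℤ) < |a i - b i|

/-- The event `ℰ(x,ℓ,L)`: in the restriction of `ω` to `S_ℓ ∩ B_x(3L)` there is an open
crossing from `∂B_x(L)` to `∂B_x(3L)`, and there is exactly one open cluster of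
`ℓ∞`-diameter larger than `L`. -/
def eventE {d : ℕ} (x : V d) (ℓ L : ℕ) : Set (Config d) :=
  {ω |
    (∃ a ∈ sphere x L, ∃ b ∈ sphere x (3 * L),
        Connected (restrictTo (slab d ℓ ∩ box x (3 * L)) ω) a b) ∧
      ∃! C : Set (V d),
        (∃ y : V d, C = cluster (restrictTo (slab d ℓ ∩ box x (3 * L)) ω) y) ∧ DiamGT C L}

/-- The event `ℬ(x,ℓ,L,M)`: `ω^S ∈ ℰ(x,ℓ,L)` for every `S ⊆ B_x(3L)` with `|S| ≤ M`. -/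
def eventB {d : ℕ} (x : V d) (ℓ L M : ℕ) : Set (Config d) :=
  {ω | ∀ S : Set (V d), S ⊆ box x (3 * L) → S.Finite → S.ncard ≤ M →
    closeOn S ω ∈ eventE x ℓ L}

/-- The embedding of `ℤ²` into `ℤ^d` (last `d - 2` coordinates zero). -/
def emb (d : ℕ) (u : ℤ × ℤ) : V d :=
  fun i => if (i : ℕ) = 0 then u.1 else if (i : ℕ) = 1 then u.2 else 0

/-- Nearest-neighbour adjacency in `ℤ²`. -/
def Adjacent₂ (u v : ℤ × ℤ) : Prop := |u.1 - v.1| + |u.2 - v.2| = 1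

/-- `A ⊆ ℤ²` is nearest-neighbour-connected. -/
def ConnSet₂ (A : Set (ℤ × ℤ)) : Prop :=
  ∀ a ∈ A, ∀ b ∈ A,
    Relation.ReflTransGen (fun u v => u ∈ A ∧ v ∈ A ∧ Adjacent₂ u v) a b

/-!
Let `N` be the number of vertices of `S_ℓ ∩ B_x(3L)` with an open arm to distance `L`. This window
has `O(L²)` vertices, because a slab is two-dimensional at large scales, so by translation
invariance `𝔼_p N ≤ O(L²) ℙ_p(0 ↔ ∂B_0(L))`. At `p_c` the `L²` is cancelled by the decay of the
one-arm probability. For fixed `L` the one-arm event depends on finitely many edges, so its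
probability is continuous in `p` and stays below `2C / L²` at some `p > p_c`. There `𝔼_p N` is
bounded uniformly in `x` and `L`, and Markov's inequality concludes. That there is room above `p_c`
also follows from the decay: at `p = 1` the one-arm probability would be `1`.
-/

open scoped Topology

theorem mul_measure_le_card_filter_le_sum_measure {α ι : Type*} [MeasurableSpace α]
    (μ : Measure α) (s : Finset ι) {A : ι → Set α} [∀ a, DecidablePred fun i => a ∈ A i]
    (hA : ∀ i ∈ s, MeasurableSet (A i)) (M : ℕ) :
    M * μ {a | M ≤ (s.filter fun i => a ∈ A i).card} ≤ ∑ i ∈ s, μ (A i) := by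
  have hmeas : ∀ i ∈ s, Measurable ((A i).indicator (1 : α → ENNReal)) := fun i hi =>
    measurable_one.indicator (hA i hi)
  have hcard (a : α) :
      ((s.filter fun i => a ∈ A i).card : ENNReal) = ∑ i ∈ s, (A i).indicator 1 a := by
    simp only [indicator_apply, Pi.one_apply, Finset.sum_boole]
  calc M * μ {a | M ≤ (s.filter fun i => a ∈ A i).card}
      = M * μ {a | (M : ENNReal) ≤ ∑ i ∈ s, (A i).indicator 1 a} := by
        simp only [← hcard, Nat.cast_le]
    _ ≤ ∫⁻ a, ∑ i ∈ s, (A i).indicator 1 a ∂μ :=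
        mul_meas_ge_le_lintegral (Finset.measurable_fun_sum s hmeas) _
    _ = ∑ i ∈ s, μ (A i) := by
        rw [lintegral_finsetSum s hmeas]
        exact Finset.sum_congr rfl fun i hi => lintegral_indicator_one (hA i hi)

theorem mem_measurableCylinders_of_dependsOn {ι : Type*} {α : ι → Type*}
    [∀ i, MeasurableSpace (α i)] [∀ i, Finite (α i)] [∀ i, MeasurableSingletonClass (α i)]
    {A : Set (∀ i, α i)} {t : Set ι} (ht : t.Finite) (hA : DependsOn (· ∈ A) t) :
    A ∈ measurableCylinders α := by
  lift t to Finset ι using ht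
  refine (mem_measurableCylinders A).2 ⟨t, t.restrict '' A, (toFinite _).measurableSet, ?_⟩
  refine (subset_preimage_image t.restrict A).antisymm ?_
  rintro ω ⟨ω', hω', hagree⟩
  exact (hA fun e he => congrFun hagree ⟨e, he⟩).mp hω'

theorem exists_mem_Ioo_lt_of_continuousOn {α β : Type*} [LinearOrder α] [TopologicalSpace α]
    [OrderTopology α] [DenselyOrdered α] [LinearOrder β] [TopologicalSpace β] [ClosedIciTopology β]
    {f : α → β} {a b c : α} {r : β} (hf : ContinuousOn f (Icc a b)) (hc : c ∈ Ico a b)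
    (hr : f c < r) : ∃ p ∈ Ioo c b, f p < r := by
  have hIoo : Ioo c b ∈ 𝓝[>] c := Ioo_mem_nhdsGT hc.2
  have hIcc : Icc a b ∈ 𝓝[>] c :=
    Filter.mem_of_superset hIoo ((Ioo_subset_Ioo_left hc.1).trans Ioo_subset_Icc_self)
  have htendsto : Filter.Tendsto f (𝓝[>] c) (𝓝 (f c)) :=
    (hf c (Ico_subset_Icc_self hc)).mono_left (nhdsWithin_le_of_mem hIcc)
  have := nhdsGT_neBot_of_exists_gt ⟨b, hc.2⟩
  exact (Filter.Eventually.and hIoo (htendsto.eventually_lt_const hr)).exists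

/-! ### Bernoulli measures -/

theorem continuous_bernoulliCyl (b : Bool) : Continuous fun p => bernoulliCyl p b := by
  cases b
  · exact ENNReal.continuous_ofReal.comp (continuous_const.sub continuous_id)
  · exact ENNReal.continuous_ofReal

theorem bernoulliCyl_ne_top (p : ℝ) (b : Bool) : bernoulliCyl p b ≠ ⊤ := by
  cases b <;> exact ENNReal.ofReal_ne_top

namespace IsBernoulli

variable {d : ℕ} {p : ℝ} {μ ν : Measure (Config d)}

theorem map_restrict_singleton (hμ : IsBernoulli d p μ) (t : Finset (Edge d)) (g : t → Bool) :
    μ.map t.restrict ({g} : Set (t → Bool)) = ∏ e : t, bernoulliCyl p (g e) := by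
  classical
  have hpre : t.restrict ⁻¹' ({g} : Set (t → Bool)) =
      {ω : Config d | ∀ e ∈ t, ω e = if h : e ∈ t then g ⟨e, h⟩ else false} := by
    ext ω
    simp +contextual [funext_iff]
  rw [Measure.map_apply (by fun_prop) (measurableSet_singleton g), hpre, hμ.2,
    ← Finset.prod_coe_sort]
  simp

open Classical in
theorem measure_cylinder (hμ : IsBernoulli d p μ) (t : Finset (Edge d)) (B : Set (t → Bool)) :
    μ (cylinder t B) = ∑ g with g ∈ B, ∏ e : t, bernoulliCyl p (g e) := by
  have hB : (Finset.univ.filter (· ∈ B) : Set (t → Bool)) = B := by simp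
  rw [cylinder, ← Measure.map_apply (by fun_prop) (toFinite B).measurableSet, ← hB,
    ← sum_measure_singleton]
  simp only [hμ.map_restrict_singleton, hB]

theorem unique (hμ : IsBernoulli d p μ) (hν : IsBernoulli d p ν) : μ = ν := by
  have := hν.1
  have hproj : IsProjectiveLimit μ fun t => ν.map t.restrict := fun t =>
    Measure.ext_of_singleton fun g => by
      rw [hμ.map_restrict_singleton, hν.map_restrict_singleton]
  have (t : Finset (Edge d)) : IsFiniteMeasure (ν.map t.restrict) := inferInstance
  exact hproj.unique fun _ => rfl

theorem measurePreserving_comp_equiv (hμ : IsBernoulli d p μ) (σ : Edge d ≃ Edge d) :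
    MeasurePreserving (fun ω : Config d => ω ∘ σ) μ μ := by
  classical
  have hmeas : Measurable fun ω : Config d => ω ∘ σ :=
    measurable_pi_lambda _ fun e => measurable_pi_apply (σ e)
  have := hμ.1
  refine ⟨hmeas, unique ⟨Measure.isProbabilityMeasure_map hmeas.aemeasurable, fun t f => ?_⟩ hμ⟩
  have hpre : (fun ω : Config d => ω ∘ σ) ⁻¹' {ω | ∀ e ∈ t, ω e = f e} =
      {ω | ∀ e ∈ t.map σ.toEmbedding, ω e = f (σ.symm e)} := by
    ext ω
    simp only [mem_preimage, mem_ofPred_eq, Function.comp_apply, Finset.forall_mem_map,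
      Equiv.coe_toEmbedding, Equiv.symm_apply_apply]
  rw [Measure.map_apply hmeas, hpre, hμ.2, Finset.prod_map]
  · simp
  · measurability

theorem continuousOn_measure {P : ℝ → Measure (Config d)} {I : Set ℝ}
    (hP : ∀ p ∈ I, IsBernoulli d p (P p)) {A : Set (Config d)}
    (hA : A ∈ measurableCylinders fun _ : Edge d => Bool) :
    ContinuousOn (fun p => P p A) I := by
  classical
  obtain ⟨t, B, -, rfl⟩ := (mem_measurableCylinders A).1 hA
  refine ContinuousOn.congr (Continuous.continuousOn ?_) fun p hp => (hP p hp).measure_cylinder t B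
  refine continuous_finsetSum _ fun g _ => continuous_iff_continuousAt.2 fun p => ?_
  exact ENNReal.tendsto_finsetProd_of_ne_top _
    (fun e _ => (continuous_bernoulliCyl (g e)).continuousAt)
    fun e _ => bernoulliCyl_ne_top p (g e)

theorem ae_eq_top (hμ : IsBernoulli d 1 μ) : ∀ᵐ ω ∂μ, ω = ⊤ := by
  have := hμ.1
  have hopen (e : Edge d) : ∀ᵐ ω ∂μ, ω e = true := by
    have hone : μ {ω | ω e = true} = 1 := by
      simpa [bernoulliCyl] using hμ.2 {e} fun _ => true
    have hmeas : MeasurableSet {ω : Config d | ω e = true} :=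
      measurableSet_eq_fun (measurable_pi_apply e) measurable_const
    exact (mem_ae_iff_prob_eq_one hmeas).2 hone
  filter_upwards [ae_all_iff.2 hopen] with ω hω
  exact funext hω

end IsBernoulli

/-! ### Lattice geometry -/

section Lattice

variable {d : ℕ}

theorem IsEdge.abs_sub_le_one {x y : V d} (h : IsEdge s(x, y)) (i : Fin d) :
    |y i - x i| ≤ 1 := by
  obtain ⟨a, b, hab, he⟩ := h
  have hle : |a i - b i| ≤ 1 :=
    (Finset.single_le_sum (f := fun i => |a i - b i|) (fun _ _ => abs_nonneg _)
      (Finset.mem_univ i)).trans_eq hab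
  rcases Sym2.eq_iff.1 he with ⟨rfl, rfl⟩ | ⟨rfl, rfl⟩
  · rwa [abs_sub_comm]
  · exact hle

theorem isEdge_map_add {e : Sym2 (V d)} (h : IsEdge e) (y : V d) : IsEdge (e.map (· + y)) := by
  obtain ⟨a, b, hab, rfl⟩ := h
  exact ⟨a + y, b + y, by simpa [Adjacent] using hab, by simp⟩

theorem finite_setOf_edge_within {S : Set (V d)} (hS : S.Finite) :
    {e : Edge d | ∀ x ∈ e.val, x ∈ S}.Finite := by
  classical
  refine ((hS.toFinset.sym2.finite_toSet).preimage Subtype.val_injective.injOn).subset ?_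
  intro e he
  simp only [mem_preimage, Finset.mem_coe, Finset.mem_sym2_iff, Finite.mem_toFinset]
  exact he

theorem box_finite (x : V d) (L : ℕ) : (box x L).Finite := by
  refine (Finite.pi' fun i => finite_Icc (x i - L) (x i + L)).subset fun y hy i => ?_
  have := abs_le.1 (hy i)
  exact ⟨by linarith, by linarith⟩

theorem mem_box_of_isEdge {x b c : V d} {L : ℕ} (hb : b ∈ box x L) (hb' : b ∉ sphere x L)
    (hbc : IsEdge s(b, c)) : c ∈ box x L := by
  intro i
  have hlt : |b i - x i| < L := (hb i).lt_of_ne fun h => hb' ⟨hb, i, h⟩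
  have hstep := hbc.abs_sub_le_one i
  have htri := abs_sub_le (c i) (b i) (x i)
  omega

theorem ncard_slab_inter_box_le (x : V d) (ℓ R : ℕ) :
    (slab d ℓ ∩ box x R).ncard ≤ (2 * R + 1) ^ 2 * (2 * ℓ + 1) ^ (d - 2) := by
  classical
  let W : Finset (V d) := Fintype.piFinset fun i : Fin d =>
    if (i : ℕ) < 2 then Finset.Icc (x i - R) (x i + R) else Finset.Icc (-(ℓ : ℤ)) ℓ
  have hsub : slab d ℓ ∩ box x R ⊆ W := by
    rintro y ⟨hslab, hbox⟩
    refine Fintype.mem_piFinset.2 fun i => ?_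
    split_ifs with hi
    · have := abs_le.1 (hbox i)
      exact Finset.mem_Icc.2 ⟨by linarith, by linarith⟩
    · exact Finset.mem_Icc.2 (abs_le.1 (hslab i (not_lt.1 hi)))
  have hcard (i : Fin d) : (if (i : ℕ) < 2 then Finset.Icc (x i - R) (x i + R) else
      Finset.Icc (-(ℓ : ℤ)) ℓ).card = if (i : ℕ) < 2 then 2 * R + 1 else 2 * ℓ + 1 := by
    split_ifs <;> simp <;> omega
  have hlong : (Finset.univ.filter fun i : Fin d => (i : ℕ) < 2).card = min d 2 :=
    Fin.card_filter_val_lt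
  have hshort : (Finset.univ.filter fun i : Fin d => ¬ (i : ℕ) < 2).card = d - 2 := by
    rw [Finset.filter_not, Finset.card_univ_sdiff, hlong, Fintype.card_fin]
    omega
  calc (slab d ℓ ∩ box x R).ncard ≤ W.card :=
        (ncard_le_ncard hsub W.finite_toSet).trans_eq (ncard_coe_finset W)
    _ = (2 * R + 1) ^ min d 2 * (2 * ℓ + 1) ^ (d - 2) := by
        simp only [W, Fintype.card_piFinset, hcard, Finset.prod_ite, Finset.prod_const, hlong,
          hshort]
    _ ≤ (2 * R + 1) ^ 2 * (2 * ℓ + 1) ^ (d - 2) := by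
        gcongr
        · omega
        · exact min_le_right d 2

/-- The translation `x ↦ x + y` acting on edges. It acts on configurations by precomposition, so
`ω ∘ translateEdge y` looks around `0` as `ω` looks around `y`. -/
def translateEdge (y : V d) : Edge d ≃ Edge d where
  toFun e := ⟨e.val.map (· + y), isEdge_map_add e.property y⟩
  invFun e := ⟨e.val.map (· + -y), isEdge_map_add e.property (-y)⟩
  left_inv e := Subtype.ext (by simp [Sym2.map_map])
  right_inv e := Subtype.ext (by simp [Sym2.map_map])

end Lattice

/-! ### Connectivity -/

section Connectivity

variable {d : ℕ} {ω ω' : Config d}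

theorem Connected.mono (h : ω ≤ ω') {x y : V d} (hxy : Connected ω x y) : Connected ω' x y :=
  Relation.ReflTransGen.mono (fun _ _ ⟨he, ho⟩ => ⟨he, Bool.eq_true_of_true_le (ho ▸ h _)⟩) x y hxy

theorem restrictTo_le (R : Set (V d)) (ω : Config d) : restrictTo R ω ≤ ω := by
  intro e
  unfold restrictTo
  split_ifs
  · exact le_rfl
  · exact Bool.false_le _

theorem dependsOn_restrictTo (R : Set (V d)) :
    DependsOn (restrictTo R) {e : Edge d | ∀ x ∈ e.val, x ∈ R} := by
  intro ω ω' h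
  funext e
  unfold restrictTo
  split_ifs with he
  · exact h e he
  · rfl

theorem OpenAdj.restrictTo {R : Set (V d)} {x y : V d} (h : OpenAdj ω x y) (hx : x ∈ R)
    (hy : y ∈ R) : OpenAdj (restrictTo R ω) x y := by
  obtain ⟨he, ho⟩ := h
  refine ⟨he, ?_⟩
  simp [Perc.restrictTo, hx, hy, ho]

theorem Connected.mem_box_or_connectedToSet_sphere {x w : V d} (h : Connected ω x w) (L : ℕ) :
    (w ∈ box x L ∧ Connected (restrictTo (box x L) ω) x w) ∨
      ConnectedToSet (restrictTo (box x L) ω) x (sphere x L) := by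
  induction h with
  | refl => exact .inl ⟨fun i => by simp, .refl⟩
  | @tail b c _ hbc ih =>
    rcases ih with ⟨hb, hxb⟩ | hsphere
    · by_cases hbs : b ∈ sphere x L
      · exact .inr ⟨b, hbs, hxb⟩
      · have hc : c ∈ box x L := mem_box_of_isEdge hb hbs hbc.1
        exact .inl ⟨hc, hxb.tail (hbc.restrictTo hb hc)⟩
    · exact .inr hsphere

theorem connectedToSet_sphere_restrictTo_box {x : V d} {L : ℕ} :
    ConnectedToSet (restrictTo (box x L) ω) x (sphere x L) ↔
      ConnectedToSet ω x (sphere x L) := by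
  constructor
  · rintro ⟨z, hz, hxz⟩
    exact ⟨z, hz, hxz.mono (restrictTo_le _ ω)⟩
  · rintro ⟨z, hz, hxz⟩
    exact (hxz.mem_box_or_connectedToSet_sphere L).elim (fun h => ⟨z, hz, h.2⟩) id

theorem openAdj_comp_translateEdge {x z : V d} (y : V d) :
    OpenAdj (ω ∘ translateEdge y) x z ↔ OpenAdj ω (x + y) (z + y) := by
  constructor
  · rintro ⟨he, ho⟩
    exact ⟨isEdge_map_add he y, ho⟩
  · rintro ⟨he, ho⟩
    have he' : IsEdge s(x, z) := by simpa using isEdge_map_add he (-y)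
    exact ⟨he', ho⟩

theorem connected_comp_translateEdge {x z : V d} (y : V d) :
    Connected (ω ∘ translateEdge y) x z ↔ Connected ω (x + y) (z + y) := by
  constructor
  · exact Relation.ReflTransGen.lift (· + y) (fun _ _ => (openAdj_comp_translateEdge y).1) x z
  · intro h
    have hlift := Relation.ReflTransGen.lift (p := OpenAdj (ω ∘ translateEdge y)) (· - y)
      (fun a b hab => (openAdj_comp_translateEdge y).2 (by simpa using hab)) _ _ h
    simpa [Connected, Function.onFun] using hlift

theorem connected_top_add_single (x : V d) (i : Fin d) (n : ℕ) :
    Connected ⊤ x (x + Pi.single i (n : ℤ)) := by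
  induction n with
  | zero => simpa [Connected] using Relation.ReflTransGen.refl
  | succ n ih =>
    refine ih.tail ⟨⟨_, _, ?_, rfl⟩, rfl⟩
    rw [Adjacent, Finset.sum_eq_single i]
    · simp
    · intro j _ hj
      simp [hj]
    · simp

end Connectivity

/-! ### The one-arm event -/

section OneArm

variable {d : ℕ}

/-- The one-arm event `x ↔ ∂B_x(L)`. -/
def armEvent (x : V d) (L : ℕ) : Set (Config d) := {ω | ConnectedToSet ω x (sphere x L)}

theorem armEvent_mem_measurableCylinders (x : V d) (L : ℕ) :
    armEvent x L ∈ measurableCylinders fun _ : Edge d => Bool := by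
  refine mem_measurableCylinders_of_dependsOn (finite_setOf_edge_within (box_finite x L)) ?_
  intro ω ω' h
  simp only [armEvent, mem_ofPred_eq]
  rw [← connectedToSet_sphere_restrictTo_box, dependsOn_restrictTo _ h,
    connectedToSet_sphere_restrictTo_box]

theorem measurableSet_armEvent (x : V d) (L : ℕ) : MeasurableSet (armEvent x L) :=
  .of_mem_measurableCylinders (armEvent_mem_measurableCylinders x L)

theorem preimage_armEvent_zero (y : V d) (L : ℕ) :
    (fun ω : Config d => ω ∘ translateEdge y) ⁻¹' armEvent 0 L = armEvent y L := by
  ext ω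
  refine (Equiv.addRight y).exists_congr fun z => and_congr ?_ ?_
  · simp [sphere]
  · simpa using connected_comp_translateEdge (ω := ω) (x := 0) (z := z) y

theorem top_mem_armEvent (hd : 0 < d) (x : V d) (L : ℕ) : ⊤ ∈ armEvent x L := by
  refine ⟨x + Pi.single ⟨0, hd⟩ (L : ℤ), ⟨fun i => ?_, ⟨0, hd⟩, by simp⟩,
    connected_top_add_single x _ L⟩
  by_cases hi : i = ⟨0, hd⟩
  · simp [hi]
  · simp [hi]

namespace IsBernoulli

variable {p : ℝ} {μ : Measure (Config d)}

theorem measure_armEvent (hμ : IsBernoulli d p μ) (y : V d) (L : ℕ) :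
    μ (armEvent y L) = μ (armEvent 0 L) := by
  rw [← preimage_armEvent_zero]
  exact (hμ.measurePreserving_comp_equiv _).measure_preimage
    (measurableSet_armEvent 0 L).nullMeasurableSet

theorem measure_armEvent_eq_one (hμ : IsBernoulli d 1 μ) (hd : 0 < d) (x : V d) (L : ℕ) :
    μ (armEvent x L) = 1 := by
  have := hμ.1
  refine (mem_ae_iff_prob_eq_one (measurableSet_armEvent x L)).1 ?_
  filter_upwards [hμ.ae_eq_top] with ω hω
  exact hω ▸ top_mem_armEvent hd x L

theorem mul_measure_compl_eventA_le (hμ : IsBernoulli d p μ) (x : V d) (ℓ L M : ℕ) :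
    M * μ (eventA x ℓ L M)ᶜ ≤ (slab d ℓ ∩ box x (3 * L)).ncard * μ (armEvent 0 L) := by
  classical
  have hfin : (slab d ℓ ∩ box x (3 * L)).Finite := (box_finite x (3 * L)).inter_of_right _
  have harmSet (ω : Config d) :
      armSet ω x ℓ L = (hfin.toFinset.filter fun y => ω ∈ armEvent y L : Finset (V d)) := by
    ext y
    rw [Finset.mem_coe, Finset.mem_filter, hfin.mem_toFinset]
    rfl
  have hcompl : (eventA x ℓ L M)ᶜ =
      {ω : Config d | M ≤ (hfin.toFinset.filter fun y => ω ∈ armEvent y L).card} := by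
    ext ω
    simp only [eventA, harmSet, mem_compl_iff, mem_ofPred_eq, Finset.finite_toSet, true_and,
      ncard_coe_finset, not_lt]
  calc M * μ (eventA x ℓ L M)ᶜ ≤ ∑ y ∈ hfin.toFinset, μ (armEvent y L) := by
        rw [hcompl]
        exact mul_measure_le_card_filter_le_sum_measure μ _
          (fun y _ => measurableSet_armEvent y L) M
    _ = (slab d ℓ ∩ box x (3 * L)).ncard * μ (armEvent 0 L) := by
        simp only [hμ.measure_armEvent, Finset.sum_const, nsmul_eq_mul,
          ncard_eq_toFinset_card _ hfin]

theorem measure_compl_eventA_le (hμ : IsBernoulli d p μ) {ℓ L M : ℕ} {c η : ℝ} (hL : 1 ≤ L)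
    (harm : μ (armEvent 0 L) ≤ ENNReal.ofReal (c / L ^ 2)) (hM : 0 < M)
    (hMη : 49 * (2 * ℓ + 1) ^ (d - 2) * c ≤ M * η) (x : V d) :
    μ (eventA x ℓ L M)ᶜ ≤ ENNReal.ofReal η := by
  set K : ℕ := (2 * ℓ + 1) ^ (d - 2)
  have hcard : (slab d ℓ ∩ box x (3 * L)).ncard ≤ 49 * K * L ^ 2 :=
    calc (slab d ℓ ∩ box x (3 * L)).ncard ≤ (2 * (3 * L) + 1) ^ 2 * K :=
          ncard_slab_inter_box_le x ℓ (3 * L)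
      _ ≤ (7 * L) ^ 2 * K := by gcongr; omega
      _ = 49 * K * L ^ 2 := by ring
  have hmul : (M : ENNReal) * μ (eventA x ℓ L M)ᶜ ≤ M * ENNReal.ofReal η :=
    calc (M : ENNReal) * μ (eventA x ℓ L M)ᶜ
        ≤ (slab d ℓ ∩ box x (3 * L)).ncard * μ (armEvent 0 L) :=
          hμ.mul_measure_compl_eventA_le x ℓ L M
      _ ≤ (49 * K * L ^ 2 : ℕ) * ENNReal.ofReal (c / L ^ 2) := by gcongr
      _ = ENNReal.ofReal (49 * (2 * ℓ + 1) ^ (d - 2) * c) := by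
          rw [← ENNReal.ofReal_natCast, ← ENNReal.ofReal_mul (Nat.cast_nonneg _)]
          congr 1
          push_cast [K]
          field_simp
      _ ≤ M * ENNReal.ofReal η := by
          rw [← ENNReal.ofReal_natCast, ← ENNReal.ofReal_mul (Nat.cast_nonneg _)]
          exact ENNReal.ofReal_le_ofReal hMη
  exact (ENNReal.mul_le_mul_iff_right (by positivity) (ENNReal.natCast_ne_top M)).1 hmul

theorem ofReal_one_sub_le_measure_eventA (hμ : IsBernoulli d p μ) {ℓ L M : ℕ} {c η : ℝ}
    (hη : 0 ≤ η) (hL : 1 ≤ L) (harm : μ (armEvent 0 L) ≤ ENNReal.ofReal (c / L ^ 2)) (hM : 0 < M)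
    (hMη : 49 * (2 * ℓ + 1) ^ (d - 2) * c ≤ M * η) (x : V d) :
    ENNReal.ofReal (1 - η) ≤ μ (eventA x ℓ L M) := by
  have := hμ.1
  rw [ENNReal.ofReal_sub 1 hη, ENNReal.ofReal_one, tsub_le_iff_right, ← measure_univ (μ := μ)]
  calc μ univ ≤ μ (eventA x ℓ L M) + μ (eventA x ℓ L M)ᶜ := measure_univ_le_add_compl _
    _ ≤ μ (eventA x ℓ L M) + ENNReal.ofReal η := by
        gcongr
        exact hμ.measure_compl_eventA_le hL harm hM hMη x

end IsBernoulli

end OneArm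

/-! ### The critical probability -/

theorem pcOf_mem_Icc (d : ℕ) (P : ℝ → Measure (Config d)) : pcOf d P ∈ Icc (0 : ℝ) 1 := by
  refine ⟨Real.sInf_nonneg fun p hp => hp.1.1, ?_⟩
  rcases eq_empty_or_nonempty {p | p ∈ Icc (0 : ℝ) 1 ∧ 0 < P p {ω | HasInfCluster ω}}
    with hempty | ⟨p, hp⟩
  · rw [pcOf, hempty, Real.sInf_empty]
    exact zero_le_one
  · exact (csInf_le ⟨0, fun q hq => hq.1.1⟩ hp).trans hp.1.2

theorem pcOf_lt_one {d : ℕ} {P : ℝ → Measure (Config d)} (hd : 0 < d)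
    (hP : IsBernoulli d 1 (P 1)) {n : ℕ} (hn : P (pcOf d P) (armEvent 0 n) < 1) : pcOf d P < 1 := by
  refine (pcOf_mem_Icc d P).2.lt_of_ne fun hpc => hn.ne ?_
  rw [hpc, hP.measure_armEvent_eq_one hd]

/-- **Lemma 1.** If the one-arm probability at criticality decays like
`C / n²`, then for every `η > 0` and `ℓ ≥ 1` there is `M > 0` such that for every
`L ≥ 1` there is `p > p_c` with `ℙ_p(𝒜(x,ℓ,L,M)) ≥ 1 - η` for every `x`. -/
theorem eventA_likely (d : ℕ) (hd : 2 ≤ d)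
    (P : ℝ → Measure (Config d)) (hP : ∀ p ∈ Icc (0 : ℝ) 1, IsBernoulli d p (P p))
    (C : ℝ) (hC : 0 < C)
    (harm : ∀ n : ℕ, 1 ≤ n →
      P (pcOf d P) {ω | ConnectedToSet ω 0 (sphere 0 n)} ≤ ENNReal.ofReal (C / n ^ 2)) :
    ∀ η : ℝ, 0 < η → ∀ ℓ : ℕ, 1 ≤ ℓ →
      ∃ M : ℕ, 0 < M ∧ ∀ L : ℕ, 1 ≤ L →
        ∃ p : ℝ, pcOf d P < p ∧ p ≤ 1 ∧
          ∀ x : V d, ENNReal.ofReal (1 - η) ≤ P p (eventA x ℓ L M) := by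
  intro η hη ℓ _
  obtain ⟨n, hn, hn1⟩ : ∃ n : ℕ, C / n ^ 2 < 1 ∧ 1 ≤ n :=
    (((tendsto_const_div_pow C 2 two_ne_zero).eventually_lt_const one_pos).and
      (Filter.eventually_ge_atTop 1)).exists
  have hpc : pcOf d P < 1 := pcOf_lt_one (by omega) (hP 1 (by simp)) <|
    (harm n hn1).trans_lt (ENNReal.ofReal_lt_one.2 hn)
  obtain ⟨M, hM⟩ := exists_nat_gt (49 * (2 * ℓ + 1) ^ (d - 2) * (2 * C) / η)
  have hM0 : 0 < M := Nat.cast_pos.1 (lt_trans (by positivity) hM)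
  refine ⟨M, hM0, fun L hL => ?_⟩
  have hpcL : P (pcOf d P) (armEvent 0 L) < ENNReal.ofReal (2 * C / L ^ 2) := by
    refine (harm L hL).trans_lt ((ENNReal.ofReal_lt_ofReal_iff (by positivity)).2 ?_)
    gcongr
    linarith
  obtain ⟨p, ⟨hpcp, hp1⟩, hpL⟩ := exists_mem_Ioo_lt_of_continuousOn
    (IsBernoulli.continuousOn_measure hP (armEvent_mem_measurableCylinders 0 L))
    ⟨(pcOf_mem_Icc d P).1, hpc⟩ hpcL
  have hμ := hP p ⟨(pcOf_mem_Icc d P).1.trans hpcp.le, hp1.le⟩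
  exact ⟨p, hpcp, hp1.le, hμ.ofReal_one_sub_le_measure_eventA hη.le hL hpL.le hM0
    ((div_lt_iff₀ hη).1 hM).le⟩

end Perc
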